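/- arXiv:1801.02413 — 13 statements merged into one kernel-verified Lean document; each statement's English description precedes it below -/
import Mathlib

section
/- Let α and β be external numbers over the hyperreal field. Then: (1) α < β if and only if α ≤ β and α ∩ β = ∅; (2) α > β if and only if α ≥ β and α ∩ β = ∅; (3) α ≤ β if and only if α < β or α ⊆ β; (4) α ≥ β if and only if α > β or α ⊆ β. -/
/-!
An external number is a nonempty convex set which is closed under point reflections
`2x - z` through its own points. Nonemptiness and convexity give (1) and (2): if `α ≤ β` but
`y ≤ x` for some `x ∈ α`, `y ∈ β`, then `x` is squeezed between two elements of `β`, so `x ∈ β`.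

For (3) and (4), if `α ≤ β` and not `α < β`, this argument yields a common point `x ∈ α ∩ β`.
Any `z ∈ α` is bounded above by an element of `β`; its reflection `2x - z ∈ α` is also bounded
above by some `y ∈ β`, so `z` is bounded below by `2x - y ∈ β`. By convexity `z ∈ β`.
-/

open Pointwise

/-- A neutrix: a convex additive subgroup of the hyperreals. -/
def IsNeutrix (N : Set Hyperreal) : Prop :=
  (0 : Hyperreal) ∈ N ∧
  (∀ x ∈ N, ∀ y ∈ N, x + y ∈ N) ∧
  (∀ x ∈ N, -x ∈ N) ∧
  (∀ x ∈ N, ∀ y ∈ N, ∀ z : Hyperreal, x ≤ z → z ≤ y → z ∈ N)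

/-- An external number: a set of the form a + A with A a neutrix. -/
def IsExternal (α : Set Hyperreal) : Prop :=
  ∃ (a : Hyperreal) (A : Set Hyperreal), IsNeutrix A ∧ α = (a + ·) '' A

/-- α ≤ β : every element of α is below some element of β. -/
def SetLE (α β : Set Hyperreal) : Prop := ∀ x ∈ α, ∃ y ∈ β, x ≤ y

/-- α < β : every element of α is below every element of β. -/
def SetLT (α β : Set Hyperreal) : Prop := ∀ x ∈ α, ∀ y ∈ β, x < y

/-- α ≥ β : every element of α is above some element of β. -/
def SetGE (α β : Set Hyperreal) : Prop := ∀ x ∈ α, ∃ y ∈ β, y ≤ x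

/-- α > β : every element of α is above every element of β. -/
def SetGT (α β : Set Hyperreal) : Prop := ∀ x ∈ α, ∀ y ∈ β, y < x

/-- ε > N : ε exceeds every element of the neutrix N. -/
def GtNeutrix (ε : Hyperreal) (N : Set Hyperreal) : Prop := ∀ m ∈ N, m < ε

/-- A flexible sequence: all values are external numbers. -/
def Flexible (u : ℕ → Set Hyperreal) : Prop := ∀ n, IsExternal (u n)

/-- N-convergence of a sequence of subsets of the hyperreals to a set α. -/
def NConv (N : Set Hyperreal) (u : ℕ → Set Hyperreal) (α : Set Hyperreal) : Prop :=
  ∀ ε : Hyperreal, GtNeutrix ε N →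
    ∃ n₀ : ℕ, ∀ n ≥ n₀, ∀ x ∈ u n, ∀ y ∈ α, |x - y| < ε

/-- Strong convergence: the terms are eventually included in the limit set. -/
def StrongConv (u : ℕ → Set Hyperreal) (α : Set Hyperreal) : Prop :=
  ∃ n₀ : ℕ, ∀ n ≥ n₀, u n ⊆ α

/-- N-Cauchy sequences of sets. -/
def NCauchy (N : Set Hyperreal) (w : ℕ → Set Hyperreal) : Prop :=
  ∀ ε : Hyperreal, GtNeutrix ε N →
    ∃ k : ℕ, ∀ m ≥ k, ∀ n ≥ k, ∀ x ∈ w m, ∀ y ∈ w n, |x - y| < ε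

/-- Strongly N-Cauchy sequences of sets. -/
def StrongNCauchy (N : Set Hyperreal) (w : ℕ → Set Hyperreal) : Prop :=
  ∃ k : ℕ, ∀ m ≥ k, ∀ n ≥ k, w n - w m ⊆ N

theorem IsExternal.nonempty {α : Set Hyperreal} (h : IsExternal α) : ∃ x, x ∈ α := by
  obtain ⟨a, A, hA, rfl⟩ := h
  exact ⟨a + 0, 0, hA.1, rfl⟩

theorem IsExternal.convex {α : Set Hyperreal} (h : IsExternal α) {x y z : Hyperreal}
    (hx : x ∈ α) (hy : y ∈ α) (hxz : x ≤ z) (hzy : z ≤ y) : z ∈ α := by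
  obtain ⟨a, A, hA, rfl⟩ := h
  obtain ⟨u, hu, rfl⟩ := hx
  obtain ⟨v, hv, rfl⟩ := hy
  refine ⟨z - a, hA.2.2.2 u hu v hv _ ?_ ?_, add_sub_cancel a z⟩
  · exact le_sub_iff_add_le'.mpr hxz
  · exact sub_le_iff_le_add'.mpr hzy

/-- An external number is symmetric about each of its points. -/
theorem IsExternal.reflect {α : Set Hyperreal} (h : IsExternal α) {x z : Hyperreal}
    (hx : x ∈ α) (hz : z ∈ α) : x + x - z ∈ α := by
  obtain ⟨a, A, hA, rfl⟩ := h
  obtain ⟨u, hu, rfl⟩ := hx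
  obtain ⟨v, hv, rfl⟩ := hz
  refine ⟨u + u + -v, hA.2.1 _ (hA.2.1 u hu u hu) _ (hA.2.2.1 v hv), ?_⟩
  dsimp only
  ring

theorem order_characterizations (α β : Set Hyperreal)
    (hα : IsExternal α) (hβ : IsExternal β) :
    (SetLT α β ↔ SetLE α β ∧ α ∩ β = ∅) ∧
    (SetGT α β ↔ SetGE α β ∧ α ∩ β = ∅) ∧
    (SetLE α β ↔ SetLT α β ∨ α ⊆ β) ∧
    (SetGE α β ↔ SetGT α β ∨ α ⊆ β) := by
  obtain ⟨b, hb⟩ := hβ.nonempty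
  refine ⟨⟨fun h => ⟨fun x hx => ⟨b, hb, (h x hx b hb).le⟩, ?_⟩, ?_⟩,
    ⟨fun h => ⟨fun x hx => ⟨b, hb, (h x hx b hb).le⟩, ?_⟩, ?_⟩, ⟨?_, ?_⟩, ⟨?_, ?_⟩⟩
  · exact Set.eq_empty_of_forall_notMem fun x hx => lt_irrefl x (h x hx.1 x hx.2)
  · rintro ⟨hle, hd⟩ x hx y hy
    by_contra hxy
    obtain ⟨y', hy', hxy'⟩ := hle x hx
    exact Set.eq_empty_iff_forall_notMem.mp hd x
      ⟨hx, hβ.convex hy hy' (not_lt.mp hxy) hxy'⟩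
  · exact Set.eq_empty_of_forall_notMem fun x hx => lt_irrefl x (h x hx.1 x hx.2)
  · rintro ⟨hge, hd⟩ x hx y hy
    by_contra hxy
    obtain ⟨y', hy', hxy'⟩ := hge x hx
    exact Set.eq_empty_iff_forall_notMem.mp hd x
      ⟨hx, hβ.convex hy' hy hxy' (not_lt.mp hxy)⟩
  · intro hle
    by_cases hlt : SetLT α β
    · exact Or.inl hlt
    · right
      unfold SetLT at hlt
      push Not at hlt
      obtain ⟨x, hx, y, hy, hyx⟩ := hlt
      obtain ⟨y', hy', hxy'⟩ := hle x hx
      have hxβ : x ∈ β := hβ.convex hy hy' hyx hxy'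
      intro z hz
      obtain ⟨u, hu, hzu⟩ := hle z hz
      obtain ⟨v, hv, hzv⟩ := hle _ (hα.reflect hx hz)
      exact hβ.convex (hβ.reflect hxβ hv) hu (sub_le_comm.mp hzv) hzu
  · rintro (h | h) x hx
    · exact ⟨b, hb, (h x hx b hb).le⟩
    · exact ⟨x, h hx, le_rfl⟩
  · intro hge
    by_cases hgt : SetGT α β
    · exact Or.inl hgt
    · right
      unfold SetGT at hgt
      push Not at hgt
      obtain ⟨x, hx, y, hy, hxy⟩ := hgt
      obtain ⟨y', hy', hxy'⟩ := hge x hx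
      have hxβ : x ∈ β := hβ.convex hy' hy hxy' hxy
      intro z hz
      obtain ⟨u, hu, hzu⟩ := hge z hz
      obtain ⟨v, hv, hzv⟩ := hge _ (hα.reflect hx hz)
      exact hβ.convex hu (hβ.reflect hxβ hv) hzu (le_sub_comm.mp hzv)
  · rintro (h | h) x hx
    · exact ⟨b, hb, (h x hx b hb).le⟩
    · exact ⟨x, h hx, le_rfl⟩
end

section
/- Let M be a neutrix over the hyperreals and let α and β be external numbers such that N(α) ⊆ M and N(β) ⊆ M. If it is not the case that α + M ≤ β + M, then α + M > β + M. In particular, if N(α) = N(β) and it is not the case that α ≤ β, then α > β. -/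
/-!
Since `A, B ⊆ M`, the sets `α + M` and `β + M` are the cosets `a + M` and `b + M`, so both claims
concern two cosets of one subgroup `N` (`N = M`, respectively `N = A = B`). If `a + n` exceeds all of
`b + N`, then for `p, q ∈ N` it exceeds `b + (q + n - p)`, and translating by `p - n` gives
`b + q < a + p`; this is `setGT_of_not_setLE`.
-/

open Pointwise

theorem setGT_of_not_setLE {N : Set Hyperreal} (hN : IsNeutrix N) (a b : Hyperreal)
    (h : ¬ SetLE ((a + ·) '' N) ((b + ·) '' N)) : SetGT ((a + ·) '' N) ((b + ·) '' N) := by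
  obtain ⟨-, hadd, hneg, -⟩ := hN
  unfold SetLE at h
  push Not at h
  obtain ⟨_, ⟨n, hn, rfl⟩, hlt⟩ := h
  rintro _ ⟨p, hp, rfl⟩ _ ⟨q, hq, rfl⟩
  have key := hlt _ ⟨q + n + -p, hadd _ (hadd _ hq _ hn) _ (hneg _ hp), rfl⟩
  dsimp only at key ⊢
  linarith

theorem image_add_neutrix {A M : Set Hyperreal} (hM : IsNeutrix M) (hA : IsNeutrix A)
    (hAM : A ⊆ M) (a : Hyperreal) : (a + ·) '' A + M = (a + ·) '' M := by
  ext x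
  constructor
  · rintro ⟨_, ⟨p, hp, rfl⟩, m, hm, rfl⟩
    exact ⟨p + m, hM.2.1 _ (hAM hp) _ hm, (add_assoc a p m).symm⟩
  · rintro ⟨m, hm, rfl⟩
    exact ⟨a + 0, ⟨0, hA.1, rfl⟩, m, hm, by simp⟩

theorem change_order (M A B : Set Hyperreal) (a b : Hyperreal)
    (hM : IsNeutrix M) (hA : IsNeutrix A) (hB : IsNeutrix B)
    (α β : Set Hyperreal) (hα : α = (a + ·) '' A) (hβ : β = (b + ·) '' B)
    (hAM : A ⊆ M) (hBM : B ⊆ M) :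
    (¬ SetLE (α + M) (β + M) → SetGT (α + M) (β + M)) ∧
    (A = B → ¬ SetLE α β → SetGT α β) := by
  subst hα hβ
  refine ⟨?_, ?_⟩
  · rw [image_add_neutrix hM hA hAM, image_add_neutrix hM hB hBM]
    exact setGT_of_not_setLE hM a b
  · rintro rfl
    exact setGT_of_not_setLE hA a b
end

section
/- Let α = a + A be an external number over the hyperreals and let β be a zeroless external number with β > 0 (i.e., y > 0 for every y ∈ β). Then |α| < β if and only if −β < α and α < β, where −β = {−y : y ∈ β}. -/
/-!
The set `|a| + A` is `a + A` or `-a + A`, and since `A = -A` the latter is `-(a + A)`. The claim is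
therefore the usual `|x| < y ↔ -y < x ∧ x < y`, applied elementwise, with `n ∈ A` replaced by `-n`
for the lower bound.
-/

open Pointwise

theorem abs_lt_iff (a : Hyperreal) (A : Set Hyperreal) (hA : IsNeutrix A)
    (α : Set Hyperreal) (hα : α = (a + ·) '' A)
    (β : Set Hyperreal) (hβ : IsExternal β)
    (hβz : (0 : Hyperreal) ∉ β) (hβpos : ∀ y ∈ β, 0 < y) :
    SetLT ((|a| + ·) '' A) β ↔ SetLT ((fun y => -y) '' β) α ∧ SetLT α β := by
  obtain ⟨-, -, hneg, -⟩ := hA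
  subst hα
  constructor
  · intro h
    refine ⟨?_, ?_⟩
    · rintro _ ⟨y, hy, rfl⟩ _ ⟨n, hn, rfl⟩
      -- `-y < a + n` is `-a + (-n) < y`, and `-n` again lies in the neutrix.
      have h1 : |a| + -n < y := h _ ⟨-n, hneg n hn, rfl⟩ y hy
      have h2 := neg_le_abs a
      show -y < a + n
      linarith
    · rintro _ ⟨n, hn, rfl⟩ y hy
      have h1 : |a| + n < y := h _ ⟨n, hn, rfl⟩ y hy
      have h2 := le_abs_self a
      show a + n < y
      linarith
  · rintro ⟨h1, h2⟩ _ ⟨n, hn, rfl⟩ y hy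
    have h3 : -y < a + -n := h1 _ ⟨y, hy, rfl⟩ _ ⟨-n, hneg n hn, rfl⟩
    have h4 : a + n < y := h2 _ ⟨n, hn, rfl⟩ y hy
    show |a| + n < y
    rcases abs_choice a with h | h <;> rw [h] <;> linarith
end

section
/- Let M and N be neutrices over the hyperreals with M ⊆ N, let α be an external number, and let u be a flexible sequence. Then the sequence (uₙ + M) (Minkowski sum) N-converges to α if and only if (uₙ) N-converges to α. -/
/-!
Since `0 ∈ M`, each `u n` is contained in `u n + M`, so convergence of `u n + M` passes to `u n`.
Conversely, if `ε` exceeds the neutrix `N` then so does `ε / 2` (`GtNeutrix.half`); eventually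
`|x - y| < ε / 2` for `x ∈ u n` and `y ∈ α`, and `|m| < ε / 2` for `m ∈ M ⊆ N`, so
`|x + m - y| < ε`.
-/

open Pointwise

/-- Halving stays above a neutrix, since a neutrix is closed under doubling. -/
lemma GtNeutrix.half {N : Set Hyperreal} (hN : IsNeutrix N) {ε : Hyperreal}
    (hε : GtNeutrix ε N) : GtNeutrix (ε / 2) N := by
  intro m hm
  have := hε (m + m) (hN.2.1 m hm m hm)
  linarith

theorem conv_add_neutrix_iff (M N : Set Hyperreal)
    (hM : IsNeutrix M) (hN : IsNeutrix N) (hMN : M ⊆ N)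
    (α : Set Hyperreal) (hα : IsExternal α)
    (u : ℕ → Set Hyperreal) (hu : Flexible u) :
    NConv N (fun n => u n + M) α ↔ NConv N u α := by
  constructor
  · intro h ε hε
    obtain ⟨n₀, hn₀⟩ := h ε hε
    -- `0 ∈ M` gives `u n ⊆ u n + M`.
    exact ⟨n₀, fun n hn x hx y hy =>
      hn₀ n hn x (Set.mem_add.2 ⟨x, hx, 0, hM.1, add_zero x⟩) y hy⟩
  · intro h ε hε
    have hε' := hε.half hN
    obtain ⟨n₀, hn₀⟩ := h (ε / 2) hε'
    refine ⟨n₀, fun n hn z hz y hy => ?_⟩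
    obtain ⟨x, hx, m, hm, rfl⟩ := Set.mem_add.1 hz
    have h1 := abs_lt.1 (hn₀ n hn x hx y hy)
    have h2 := hε' m (hMN hm)
    have h3 := hε' (-m) (hMN (hM.2.2.1 m hm))
    rw [abs_lt]
    constructor <;> linarith [h1.1, h1.2]
end

section
/- Let u be a flexible sequence over the hyperreals with uₙ = aₙ + Aₙ for all n, where aₙ ∈ ℝ* and Aₙ = N(uₙ). Let N be a neutrix and α = a + A an external number. Then u N-converges to α if and only if the precise sequence (aₙ) N-converges to a and the sequence of neutrices (Aₙ) N-converges to A. -/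
/-!
Convergence of `a n + A n` to `a₀ + A₀` splits into components by the triangle inequality applied to
`(a n + z) - (a₀ + w) = (a n - a₀) + (z - w)`. As `N` is closed under addition, `ε > N` implies
`ε / 2 > N` (`GtNeutrix.half`), so each of two terms can be made smaller than `ε / 2`. In the
forward direction, `0` lies in every neutrix, so the representatives `a n` and `a₀` themselves are
controlled; subtracting them leaves the neutrix parts.
-/

open Pointwise

theorem conv_components (N : Set Hyperreal) (hN : IsNeutrix N)
    (a : ℕ → Hyperreal) (A : ℕ → Set Hyperreal) (hA : ∀ n, IsNeutrix (A n))
    (u : ℕ → Set Hyperreal) (hu : ∀ n, u n = (a n + ·) '' A n)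
    (a₀ : Hyperreal) (A₀ : Set Hyperreal) (hA₀ : IsNeutrix A₀)
    (α : Set Hyperreal) (hα : α = (a₀ + ·) '' A₀) :
    NConv N u α ↔
      (NConv N (fun n => {a n}) {a₀} ∧ NConv N A A₀) := by
  subst hα
  constructor
  · intro h
    constructor
    · intro ε hε
      obtain ⟨n₀, hn₀⟩ := h ε hε
      refine ⟨n₀, fun n hn x hx y hy => ?_⟩
      rw [Set.mem_singleton_iff] at hx hy
      subst hx hy
      -- Both neutrices contain `0`, so `a n ∈ u n` and `a₀ ∈ α`.
      refine hn₀ n hn _ ?_ _ ⟨0, hA₀.1, add_zero _⟩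
      rw [hu n]
      exact ⟨0, (hA n).1, add_zero _⟩
    · intro ε hε
      obtain ⟨n₀, hn₀⟩ := h (ε / 2) (hε.half hN)
      refine ⟨n₀, fun n hn x hx y hy => ?_⟩
      have key : ∀ z ∈ A n, ∀ w ∈ A₀, |(a n + z) - (a₀ + w)| < ε / 2 := fun z hz w hw =>
        hn₀ n hn _ (by rw [hu n]; exact ⟨z, hz, rfl⟩) _ ⟨w, hw, rfl⟩
      have h1 := abs_lt.1 (key x hx y hy)
      have h2 := abs_lt.1 (key 0 (hA n).1 0 hA₀.1)
      rw [abs_lt]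
      constructor <;> linarith [h1.1, h1.2, h2.1, h2.2]
  · rintro ⟨ha, hAA⟩ ε hε
    obtain ⟨n₁, hn₁⟩ := ha (ε / 2) (hε.half hN)
    obtain ⟨n₂, hn₂⟩ := hAA (ε / 2) (hε.half hN)
    refine ⟨max n₁ n₂, fun n hn x hx y hy => ?_⟩
    rw [hu n] at hx
    obtain ⟨z, hz, rfl⟩ := hx
    obtain ⟨w, hw, rfl⟩ := hy
    have h1 := abs_lt.1 (hn₁ n (le_of_max_le_left hn) (a n) rfl a₀ rfl)
    have h2 := abs_lt.1 (hn₂ n (le_of_max_le_right hn) z hz w hw)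
    rw [abs_lt]
    constructor <;> linarith [h1.1, h1.2, h2.1, h2.2]
end

section
/- Let N be a neutrix over the hyperreals, u a flexible sequence with uₙ = aₙ + Aₙ for all n (aₙ ∈ ℝ*, Aₙ = N(uₙ)), and α = a + A an external number. If u N-converges to α, then the sequence of absolute values (|uₙ| := |aₙ| + Aₙ) N-converges to |α| := |a| + A. -/
/-!
A neutrix is symmetric, so if `p ∈ A n` and `q ∈ A₀` then convergence of `u` bounds both
`|(a n - a₀) + (p - q)|` and `|(a n - a₀) - (p - q)|` by `ε`. The larger of these two is
`|a n - a₀| + |p - q|`, which by the reverse triangle inequality dominates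
`|(|a n| + p) - (|a₀| + q)|`. Hence the same `n₀` works for the absolute values.
-/

open Pointwise

theorem abs_preserves_conv (N : Set Hyperreal) (hN : IsNeutrix N)
    (a : ℕ → Hyperreal) (A : ℕ → Set Hyperreal) (hA : ∀ n, IsNeutrix (A n))
    (u : ℕ → Set Hyperreal) (hu : ∀ n, u n = (a n + ·) '' A n)
    (a₀ : Hyperreal) (A₀ : Set Hyperreal) (hA₀ : IsNeutrix A₀)
    (α : Set Hyperreal) (hα : α = (a₀ + ·) '' A₀)
    (h : NConv N u α) :
    NConv N (fun n => (|a n| + ·) '' A n) ((|a₀| + ·) '' A₀) := by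
  intro ε hε
  obtain ⟨n₀, hn₀⟩ := h ε hε
  refine ⟨n₀, fun n hn => ?_⟩
  rintro _ ⟨p, hp, rfl⟩ _ ⟨q, hq, rfl⟩
  subst hα
  have h₁ := hn₀ n hn (a n + p) (hu n ▸ ⟨p, hp, rfl⟩) (a₀ + q) ⟨q, hq, rfl⟩
  have h₂ := hn₀ n hn (a n + -p) (hu n ▸ ⟨-p, (hA n).2.2.1 p hp, rfl⟩)
    (a₀ + -q) ⟨-q, hA₀.2.2.1 q hq, rfl⟩
  have h₃ := abs_le.1 (abs_abs_sub_abs_le (a n) a₀)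
  rw [abs_lt] at h₁ h₂
  -- Whichever sign `a n - a₀` has, `h₁` and `h₂` together give `|a n - a₀| ± (p - q) < ε`.
  change |(|a n| + p) - (|a₀| + q)| < ε
  rw [abs_lt]
  rcases abs_cases (a n - a₀) with ⟨h₄, -⟩ | ⟨h₄, -⟩ <;> rw [h₄] at h₃ <;>
    constructor <;> linarith [h₁.1, h₁.2, h₂.1, h₂.2, h₃.1, h₃.2]
end

section
/- Let N be a neutrix over the hyperreals with N ≠ ℝ*, and let u be a flexible sequence that N-converges to some external number α. Then u is eventually bounded: there exist n₀ ∈ ℕ and r ∈ ℝ* such that |x| ≤ r for all n ≥ n₀ and all x ∈ uₙ. -/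
/-!
Since `N` is a proper convex subgroup, the absolute value of any point outside `N` exceeds `N`, so
it may serve as the `ε` of `N`-convergence. The terms of the sequence then eventually lie within
`ε` of a representative `a` of the limit, and are therefore bounded by `ε + |a|`.
-/

open Pointwise

theorem conv_eventually_bounded (N : Set Hyperreal) (hN : IsNeutrix N)
    (hNR : N ≠ Set.univ)
    (u : ℕ → Set Hyperreal) (hu : Flexible u)
    (α : Set Hyperreal) (hα : IsExternal α)
    (h : NConv N u α) :
    ∃ (n₀ : ℕ) (r : Hyperreal), ∀ n ≥ n₀, ∀ x ∈ u n, |x| ≤ r := by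
  obtain ⟨-, -, hneg, hconv⟩ := hN
  obtain ⟨c, hc⟩ := (Set.ne_univ_iff_exists_notMem N).mp hNR
  -- `|c|` exceeds `N`: an `m ∈ N` with `|c| ≤ m` would put `c ∈ [-m, m]` into `N` by convexity.
  have hgt : GtNeutrix |c| N := fun m hm => by
    by_contra hle
    have hcm := abs_le.mp (not_lt.mp hle)
    exact hc (hconv (-m) (hneg m hm) m hm c hcm.1 hcm.2)
  obtain ⟨n₀, hn₀⟩ := h |c| hgt
  obtain ⟨a, A, hA, rfl⟩ := hα
  refine ⟨n₀, |c| + |a|, fun n hn x hx => ?_⟩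
  have hxa : |x - a| < |c| := hn₀ n hn x hx a ⟨0, hA.1, add_zero a⟩
  have htri := abs_add_le (x - a) a
  rw [sub_add_cancel] at htri
  linarith
end

section
/- Let N be a neutrix over the hyperreals and let u, v be flexible sequences such that u N-converges to the external number α, v N-converges to the external number β, and there exists n₀ ∈ ℕ with uₙ ≤ vₙ for all n ≥ n₀. Then α + N ≤ β + N. In particular, if N(α) = N(β) = N, then α ≤ β. -/
/-!
Everything rests on one estimate: for `p ∈ α` and `q ∈ β`, the difference `p - q` is bounded above by
an element of `N`. Otherwise `p - q > N`, and then also `(p - q) / 2 > N` because `N` is closed under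
addition. Using `(p - q) / 2` as the tolerance in both limits gives, for large `n`, elements `x ≤ y` of
`u n` and `v n` with `p - x < (p - q) / 2` and `y - q < (p - q) / 2`, which is absurd.
Both inequalities between sets then follow by translating `q` by an element of `N`.
-/

open Pointwise

theorem exists_mem_neutrix_sub_le {N : Set Hyperreal} (hN : IsNeutrix N)
    {u v : ℕ → Set Hyperreal} (hu : Flexible u) {α β : Set Hyperreal}
    (huα : NConv N u α) (hvβ : NConv N v β)
    (hle : ∃ n₀ : ℕ, ∀ n ≥ n₀, SetLE (u n) (v n))
    {p q : Hyperreal} (hp : p ∈ α) (hq : q ∈ β) : ∃ k ∈ N, p - q ≤ k := by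
  by_contra! h
  have hε : GtNeutrix ((p - q) / 2) N := fun m hm => by
    linarith [h (m + m) (hN.2.1 m hm m hm)]
  obtain ⟨n₁, h₁⟩ := huα _ hε
  obtain ⟨n₂, h₂⟩ := hvβ _ hε
  obtain ⟨n₀, h₀⟩ := hle
  let n := max n₀ (max n₁ n₂)
  have hn₀ : n ≥ n₀ := le_max_left _ _
  have hn₁ : n ≥ n₁ := (le_max_left _ _).trans (le_max_right _ _)
  have hn₂ : n ≥ n₂ := (le_max_right _ _).trans (le_max_right _ _)
  obtain ⟨x, hx⟩ : (u n).Nonempty := by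
    obtain ⟨a, A, hA, hun⟩ := hu n
    exact hun ▸ ⟨a + 0, 0, hA.1, rfl⟩
  obtain ⟨y, hy, hxy⟩ := h₀ n hn₀ x hx
  have hxp := (abs_lt.mp (h₁ n hn₁ x hx p hp)).1
  have hyq := (abs_lt.mp (h₂ n hn₂ y hy q hq)).2
  linarith

theorem monotony_of_limits (N : Set Hyperreal) (hN : IsNeutrix N)
    (u v : ℕ → Set Hyperreal) (hu : Flexible u) (hv : Flexible v)
    (α β : Set Hyperreal) (hα : IsExternal α) (hβ : IsExternal β)
    (huα : NConv N u α) (hvβ : NConv N v β)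
    (hle : ∃ n₀ : ℕ, ∀ n ≥ n₀, SetLE (u n) (v n)) :
    SetLE (α + N) (β + N) ∧
    (∀ a b : Hyperreal, α = (a + ·) '' N → β = (b + ·) '' N → SetLE α β) := by
  have key {p q : Hyperreal} (hp : p ∈ α) (hq : q ∈ β) : ∃ k ∈ N, p - q ≤ k :=
    exists_mem_neutrix_sub_le hN hu huα hvβ hle hp hq
  constructor
  · rintro _ ⟨p, hp, m, hm, rfl⟩
    obtain ⟨q, hq⟩ : β.Nonempty := by
      obtain ⟨b, B, hB, hβB⟩ := hβ
      exact hβB ▸ ⟨b + 0, 0, hB.1, rfl⟩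
    obtain ⟨k, hk, hpk⟩ := key hp hq
    refine ⟨q + (k + m), Set.add_mem_add hq (hN.2.1 k hk m hm), ?_⟩
    change p + m ≤ q + (k + m)
    linarith
  · intro a b _ hb p hp
    have hbβ : b ∈ β := hb ▸ ⟨0, hN.1, add_zero b⟩
    obtain ⟨k, hk, hpk⟩ := key hp hbβ
    exact ⟨b + k, hb ▸ ⟨k, hk, rfl⟩, by linarith⟩
end

section
/- Let N be a neutrix over the hyperreals, and let u, v be flexible sequences such that u N-converges to 0 (i.e., to the external number {0}) and v is eventually bounded by a positive hyperreal r (there is n₁ ∈ ℕ such that |y| ≤ r for all n ≥ n₁ and y ∈ vₙ). Then the product sequence (uₙvₙ), where uₙvₙ = {xy : x ∈ uₙ, y ∈ vₙ}, rN-converges to 0, where rN = {rm : m ∈ N}. -/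
open Pointwise

theorem bounded_mul_inf (N : Set Hyperreal) (hN : IsNeutrix N)
    (u v : ℕ → Set Hyperreal) (hu : Flexible u) (hv : Flexible v)
    (h0 : NConv N u {0})
    (r : Hyperreal) (hr : 0 < r)
    (hb : ∃ n₁ : ℕ, ∀ n ≥ n₁, ∀ y ∈ v n, |y| ≤ r) :
    NConv ((r * ·) '' N) (fun n => u n * v n) {0} := by
  obtain ⟨n₁, hb⟩ := hb
  intro ε hε
  -- `ε > rN` means `ε / r > N`, so `u` is eventually below `ε / r`, and `|a * b| < (ε / r) * r`.
  have hεr : GtNeutrix (ε / r) N := fun m hm => by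
    rw [lt_div_iff₀' hr]
    exact hε _ ⟨m, hm, rfl⟩
  obtain ⟨n₀, h0⟩ := h0 _ hεr
  refine ⟨max n₀ n₁, fun n hn z hz y hy => ?_⟩
  obtain ⟨a, ha, b, hb', rfl⟩ := Set.mem_mul.1 hz
  obtain rfl : y = 0 := hy
  have h1 := h0 n (le_of_max_le_left hn) a ha 0 rfl
  have h2 := hb n (le_of_max_le_right hn) b hb'
  rw [sub_zero] at h1 ⊢
  calc |a * b| = |a| * |b| := abs_mul a b
    _ ≤ |a| * r := mul_le_mul_of_nonneg_left h2 (abs_nonneg a)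
    _ < ε := (lt_div_iff₀ hr).1 h1
end

section
/- (Squeeze theorem for flexible sequences.) Let N and M be neutrices over the hyperreals, let u, v, w be flexible sequences and α an external number such that u N-converges to α and w M-converges to α. If there is n₀ ∈ ℕ such that uₙ ≤ vₙ ≤ wₙ for all n ≥ n₀, then v (N+M)-converges to α, where N + M is the Minkowski sum (again a neutrix). In particular, if N = M then v N-converges to α. -/
/-!
The upper estimate for `v n` is immediate from `v n ≤ w n`. The relation `u n ≤ v n` only says that
each `x ∈ u n` lies below *some* `y ∈ v n`, so the lower estimate uses the symmetry of external
numbers: for `z ∈ v n` the reflected point `2 * y - z` is again in `v n`, hence lies below some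
`t ∈ w n`, which gives `z ≥ 2 * y - t ≥ 2 * x - t`. If `x` and `t` are within `ε / 3` of `a ∈ α`,
then `z > a - ε`. This is enough because `ε > N + M` implies `ε / 3 > N` and `ε / 3 > M`, neutrices
being closed under tripling.
-/

open Pointwise

/-- An external number is symmetric about each of its points. -/
lemma IsExternal.reflect_mem {α : Set Hyperreal} (hα : IsExternal α) {y z : Hyperreal}
    (hy : y ∈ α) (hz : z ∈ α) : 2 * y - z ∈ α := by
  obtain ⟨a, A, ⟨-, hadd, hneg, -⟩, rfl⟩ := hα
  obtain ⟨s, hs, rfl⟩ := hy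
  obtain ⟨t, ht, rfl⟩ := hz
  exact ⟨s + s + -t, hadd _ (hadd _ hs _ hs) _ (hneg _ ht), by ring⟩

lemma IsExternal.nonempty_s12 {α : Set Hyperreal} (hα : IsExternal α) : α.Nonempty := by
  obtain ⟨a, A, hA, rfl⟩ := hα
  exact ⟨_, 0, hA.1, rfl⟩

lemma GtNeutrix.div_three {ε : Hyperreal} {N : Set Hyperreal} (hN : IsNeutrix N)
    (h : GtNeutrix ε N) : GtNeutrix (ε / 3) N := by
  intro m hm
  have := h _ (hN.2.1 _ (hN.2.1 _ hm _ hm) _ hm)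
  linarith

theorem squeeze (N M : Set Hyperreal) (hN : IsNeutrix N) (hM : IsNeutrix M)
    (u v w : ℕ → Set Hyperreal)
    (hu : Flexible u) (hv : Flexible v) (hw : Flexible w)
    (α : Set Hyperreal) (hα : IsExternal α)
    (huα : NConv N u α) (hwα : NConv M w α)
    (hsq : ∃ n₀ : ℕ, ∀ n ≥ n₀, SetLE (u n) (v n) ∧ SetLE (v n) (w n)) :
    NConv (N + M) v α ∧ (N = M → NConv N v α) := by
  have key : NConv (N + M) v α := by
    intro ε hε
    have hεN : GtNeutrix ε N := fun m hm => hε m ⟨m, hm, 0, hM.1, add_zero m⟩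
    have hεM : GtNeutrix ε M := fun m hm => hε m ⟨0, hN.1, m, hm, zero_add m⟩
    have hpos : 0 < ε := hεN 0 hN.1
    obtain ⟨n₀, h₀⟩ := hsq
    obtain ⟨n₁, h₁⟩ := huα _ (hεN.div_three hN)
    obtain ⟨n₂, h₂⟩ := hwα _ (hεM.div_three hM)
    refine ⟨max n₀ (max n₁ n₂), fun n hn z hz a ha => ?_⟩
    simp only [ge_iff_le, max_le_iff] at hn
    obtain ⟨huv, hvw⟩ := h₀ n hn.1
    obtain ⟨x, hx⟩ := (hu n).nonempty_s12
    obtain ⟨y, hy, hxy⟩ := huv x hx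
    obtain ⟨t, ht, hzt⟩ := hvw z hz
    obtain ⟨t', ht', hyt⟩ := hvw _ ((hv n).reflect_mem hy hz)
    have e₁ := abs_lt.1 (h₁ n hn.2.1 x hx a ha)
    have e₂ := abs_lt.1 (h₂ n hn.2.2 t ht a ha)
    have e₃ := abs_lt.1 (h₂ n hn.2.2 t' ht' a ha)
    rw [abs_lt]
    constructor <;> linarith
  refine ⟨key, ?_⟩
  rintro rfl
  -- Here `N + N ⊆ N`, so `ε > N` already gives `ε > N + N`.
  intro ε hε
  refine key ε ?_
  rintro _ ⟨p, hp, q, hq, rfl⟩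
  exact hε _ (hN.2.1 p hp q hq)
end

section
/- Let N, M be neutrices over the hyperreals, c ∈ ℝ*, and let u, v be flexible sequences such that u N-converges to the external number α and v M-converges to the external number β. Then: (1) the sequence (uₙ + vₙ) (Minkowski sums) (N+M)-converges to α + β; (2) the sequence (uₙ − vₙ) (N+M)-converges to α − β; (3) the sequence (cuₙ), where cuₙ = {cx : x ∈ uₙ}, cN-converges to cα, where cN = {cm : m ∈ N}. In particular, if M = N then (uₙ + vₙ) and (uₙ − vₙ) N-converge to α + β and α − β respectively. -/
/-!
Everything rests on how thresholds `ε > N` behave. Since a neutrix is closed under doubling,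
`ε > N` implies `ε / 2 > N`; as `N` and `M` are both contained in the neutrix `N + M`, a threshold
`ε > N + M` can be split into halves for `u` and `v`, and the triangle inequality handles sums and differences.
For multiples with `c ≠ 0`, symmetry of `N` shows that `ε > cN` implies `ε / |c| > N`; for `c = 0` all
the sets involved lie in `{0}`. The last claim follows from `N + N = N`.
-/

open Pointwise

/-- If `ε > N + M`, then `ε / 2` exceeds both summands: `2x = (x + x) + 0` lies in `N + M` for
`x ∈ N`, and similarly for `M`. -/
lemma GtNeutrix.half_of_add {N M : Set Hyperreal} (hN : IsNeutrix N) (hM : IsNeutrix M)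
    {ε : Hyperreal} (h : GtNeutrix ε (N + M)) :
    GtNeutrix (ε / 2) N ∧ GtNeutrix (ε / 2) M := by
  constructor
  · intro x hx
    have := h _ (Set.add_mem_add (hN.2.1 x hx x hx) hM.1)
    linarith
  · intro x hx
    have := h _ (Set.add_mem_add hN.1 (hM.2.1 x hx x hx))
    linarith

lemma IsNeutrix.add_self {N : Set Hyperreal} (hN : IsNeutrix N) : N + N = N := by
  ext x
  constructor
  · rintro ⟨a, ha, b, hb, rfl⟩
    exact hN.2.1 a ha b hb
  · intro hx
    exact ⟨x, hx, 0, hN.1, add_zero x⟩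

lemma NConv.add_neutrix {N M : Set Hyperreal} (hN : IsNeutrix N) (hM : IsNeutrix M)
    {u v : ℕ → Set Hyperreal} {α β : Set Hyperreal} (hu : NConv N u α) (hv : NConv M v β) :
    NConv (N + M) (fun n => u n + v n) (α + β) := by
  intro ε hε
  obtain ⟨h₁, h₂⟩ := hε.half_of_add hN hM
  obtain ⟨n₁, hn₁⟩ := hu _ h₁
  obtain ⟨n₂, hn₂⟩ := hv _ h₂
  refine ⟨max n₁ n₂, fun n hn => ?_⟩
  rintro _ ⟨x, hx, y, hy, rfl⟩ _ ⟨a, ha, b, hb, rfl⟩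
  have hxa := abs_lt.1 (hn₁ n (le_of_max_le_left hn) x hx a ha)
  have hyb := abs_lt.1 (hn₂ n (le_of_max_le_right hn) y hy b hb)
  simp only
  rw [abs_lt]
  constructor <;> linarith [hxa.1, hxa.2, hyb.1, hyb.2]

lemma NConv.neg {M : Set Hyperreal} {v : ℕ → Set Hyperreal} {β : Set Hyperreal}
    (hv : NConv M v β) : NConv M (fun n => -v n) (-β) := by
  intro ε hε
  obtain ⟨n₀, h⟩ := hv ε hε
  refine ⟨n₀, fun n hn x hx y hy => ?_⟩
  have := h n hn (-x) hx (-y) hy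
  rwa [neg_sub_neg, abs_sub_comm] at this

lemma NConv.sub_neutrix {N M : Set Hyperreal} (hN : IsNeutrix N) (hM : IsNeutrix M)
    {u v : ℕ → Set Hyperreal} {α β : Set Hyperreal} (hu : NConv N u α) (hv : NConv M v β) :
    NConv (N + M) (fun n => u n - v n) (α - β) := by
  simpa only [sub_eq_add_neg] using hu.add_neutrix hN hM hv.neg

lemma NConv.const_mul {N : Set Hyperreal} (hN : IsNeutrix N) (c : Hyperreal)
    {u : ℕ → Set Hyperreal} {α : Set Hyperreal} (hu : NConv N u α) :
    NConv ((c * ·) '' N) (fun n => (c * ·) '' u n) ((c * ·) '' α) := by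
  intro ε hε
  rcases eq_or_ne c 0 with rfl | hc
  · have hε0 : 0 < ε := hε 0 ⟨0, hN.1, mul_zero _⟩
    refine ⟨0, fun n _ => ?_⟩
    rintro _ ⟨x, -, rfl⟩ _ ⟨y, -, rfl⟩
    simpa using hε0
  · have hc_pos : 0 < |c| := abs_pos.2 hc
    have hgt : GtNeutrix (ε / |c|) N := by
      intro m hm
      rw [lt_div_iff₀ hc_pos]
      -- `m * |c|` is `c * m` or `c * (-m)`, and `N` is symmetric.
      rcases abs_choice c with h | h <;> rw [h]
      · exact hε _ ⟨m, hm, mul_comm c m⟩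
      · exact hε _ ⟨-m, hN.2.2.1 m hm, by ring⟩
    obtain ⟨n₀, h⟩ := hu _ hgt
    refine ⟨n₀, fun n hn => ?_⟩
    rintro _ ⟨x, hx, rfl⟩ _ ⟨y, hy, rfl⟩
    have := (lt_div_iff₀ hc_pos).1 (h n hn x hx y hy)
    simpa only [← mul_sub, abs_mul, mul_comm] using this

theorem operations_N_conv (N M : Set Hyperreal)
    (hN : IsNeutrix N) (hM : IsNeutrix M) (c : Hyperreal)
    (u v : ℕ → Set Hyperreal) (hu : Flexible u) (hv : Flexible v)
    (α β : Set Hyperreal) (hα : IsExternal α) (hβ : IsExternal β)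
    (huα : NConv N u α) (hvβ : NConv M v β) :
    NConv (N + M) (fun n => u n + v n) (α + β) ∧
    NConv (N + M) (fun n => u n - v n) (α - β) ∧
    NConv ((c * ·) '' N) (fun n => (c * ·) '' u n) ((c * ·) '' α) ∧
    (M = N →
      NConv N (fun n => u n + v n) (α + β) ∧
      NConv N (fun n => u n - v n) (α - β)) := by
  have hadd := huα.add_neutrix hN hM hvβ
  have hsub := huα.sub_neutrix hN hM hvβ
  refine ⟨hadd, hsub, huα.const_mul hN c, ?_⟩
  rintro rfl
  rw [hN.add_self] at hadd hsub
  exact ⟨hadd, hsub⟩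
end

section
/- Let N be a neutrix over the hyperreals, u a zeroless flexible sequence (0 ∉ uₙ for all n), and α = a + A a zeroless external number with |a| > N (i.e., m < |a| for all m ∈ N). If u N-converges to α, then the sequence of sets (1/uₙ), where 1/uₙ = {1/x : x ∈ uₙ}, (N/a²)-converges to 1/α := {1/y : y ∈ α}, where N/a² = {m/a² : m ∈ N}. -/
/-!
Every element `x` of `u n` (for large `n`) and every element `y` of `α` satisfies `|a| / 2 < |x|`
and `|a| / 2 < |y|`: for `y` because `A` is a convex group not containing `a`, hence not containing
anything of size at least `|a| / 2`; for `x` because `|a| / 2` still exceeds the group `N`, so it is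
an admissible tolerance in the convergence of `u` towards `a ∈ α`. Therefore
`|1/x - 1/y| = |x - y| / (|x| |y|) ≤ 4 |x - y| / a²`, and a tolerance `ε > N / a²` for the inverses
is reached from the tolerance `ε a² / 4` for `u`, which exceeds `N` because `4 N ⊆ N`.
-/

open Pointwise

/-- A convex additive group that omits `a` omits everything of absolute value at least `|a| / 2`. -/
lemma IsNeutrix.abs_lt_half {A : Set Hyperreal} (hA : IsNeutrix A) {a s : Hyperreal}
    (ha : a ∉ A) (hs : s ∈ A) : |s| < |a| / 2 := by
  obtain ⟨-, hadd, hneg, hconv⟩ := hA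
  by_contra! hle
  have hs' : |s| ∈ A := by
    rcases abs_choice s with h | h <;> rw [h]
    exacts [hs, hneg s hs]
  have h2 := hadd _ hs' _ hs'
  exact ha (hconv _ (hneg _ h2) _ h2 a (by linarith [neg_abs_le a]) (by linarith [le_abs_self a]))

lemma abs_one_div_sub_lt {a x y ε : Hyperreal} (ha : 0 < |a|) (hx : |a| / 2 < |x|)
    (hy : |a| / 2 < |y|) (hxy : |x - y| < ε * a ^ 2 / 4) : |1 / x - 1 / y| < ε := by
  have hx0 : 0 < |x| := by linarith
  have hy0 : 0 < |y| := by linarith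
  have hsq : 0 < a ^ 2 := by rw [← sq_abs]; positivity
  have hε : 0 < ε := by
    have : 0 < ε * a ^ 2 := by linarith [abs_nonneg (x - y)]
    exact pos_of_mul_pos_left this hsq.le
  have hprod : a ^ 2 / 4 ≤ |x| * |y| := by
    have := mul_le_mul hx.le hy.le (by positivity) hx0.le
    rw [← sq_abs a]
    linarith
  rw [div_sub_div _ _ (abs_pos.mp hx0) (abs_pos.mp hy0), abs_div, abs_mul,
    div_lt_iff₀ (by positivity), one_mul, mul_one, abs_sub_comm]
  calc |x - y| < ε * (a ^ 2 / 4) := by linarith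
    _ ≤ ε * (|x| * |y|) := by gcongr

theorem inv_N_conv (N : Set Hyperreal) (hN : IsNeutrix N)
    (u : ℕ → Set Hyperreal) (hu : Flexible u)
    (huz : ∀ n, (0 : Hyperreal) ∉ u n)
    (a : Hyperreal) (A : Set Hyperreal) (hA : IsNeutrix A)
    (α : Set Hyperreal) (hα : α = (a + ·) '' A)
    (hαz : (0 : Hyperreal) ∉ α)
    (haN : ∀ m ∈ N, m < |a|)
    (h : NConv N u α) :
    NConv ((fun m => m / a ^ 2) '' N)
      (fun n => (fun x => 1 / x) '' u n) ((fun y => 1 / y) '' α) := by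
  have ha : 0 < |a| := haN 0 hN.1
  have haα : a ∈ α := by
    rw [hα]
    exact ⟨0, hA.1, add_zero a⟩
  have haA : a ∉ A := fun hmem => hαz (by
    rw [hα]
    exact ⟨-a, hA.2.2.1 a hmem, add_neg_cancel a⟩)
  have hsq : 0 < a ^ 2 := by rw [← sq_abs]; positivity
  intro ε hε
  obtain ⟨n₁, h₁⟩ := h (|a| / 2) (fun m hm => by
    linarith [haN _ (hN.2.1 m hm m hm)])
  obtain ⟨n₂, h₂⟩ := h (ε * a ^ 2 / 4) (fun m hm => by
    have h2 := hN.2.1 m hm m hm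
    have h4 := (div_lt_iff₀ hsq).mp (hε _ ⟨_, hN.2.1 _ h2 _ h2, rfl⟩)
    linarith)
  refine ⟨max n₁ n₂, ?_⟩
  rintro n hn _ ⟨x, hx, rfl⟩ _ ⟨y, hy, rfl⟩
  refine abs_one_div_sub_lt ha ?_ ?_ (h₂ n (le_of_max_le_right hn) x hx y hy)
  · have hxa := h₁ n (le_of_max_le_left hn) x hx a haα
    have := abs_sub_abs_le_abs_sub a x
    rw [abs_sub_comm] at this
    linarith
  · rw [hα] at hy
    obtain ⟨s, hs, rfl⟩ := hy
    have hsa := hA.abs_lt_half haA hs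
    have := abs_sub_abs_le_abs_sub a (-s)
    rw [abs_neg, sub_neg_eq_add] at this
    change |a| / 2 < |a + s|
    linarith
end

section
/- Let N be a neutrix over the hyperreals and let u be a flexible sequence with uₙ = aₙ + Aₙ for all n, where aₙ ∈ ℝ* and Aₙ is a neutrix. Then: (1) u is N-Cauchy if and only if both (aₙ) and (Aₙ) are N-Cauchy; (2) u is strongly N-Cauchy if and only if both (aₙ) and (Aₙ) are strongly N-Cauchy. -/
/-!
Everything rests on the decomposition `(a m + x) - (a n + y) = (a m - a n) + (x - y)` for
`x ∈ A m`, `y ∈ A n`. Since `0` lies in every `A n`, each `a n` belongs to `u n`; hence the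
Cauchy property of `u` passes to `a`, and comparing `a n + x` with `a n` inside the same `u n`
bounds the elements `x ∈ A n` themselves. The `ε`-versions lose a factor `2`, which is harmless
because `ε / 2` still exceeds the neutrix `N` (`GtNeutrix.half`); in the strong versions the
corresponding fact is that `N` is closed under addition and subtraction.
-/

open Pointwise

theorem cauchy_components (N : Set Hyperreal) (hN : IsNeutrix N)
    (a : ℕ → Hyperreal) (A : ℕ → Set Hyperreal) (hA : ∀ n, IsNeutrix (A n))
    (u : ℕ → Set Hyperreal) (hu : ∀ n, u n = (a n + ·) '' A n) :
    (NCauchy N u ↔ NCauchy N (fun n => {a n}) ∧ NCauchy N A) ∧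
    (StrongNCauchy N u ↔
      StrongNCauchy N (fun n => {a n}) ∧ StrongNCauchy N A) := by
  obtain rfl : u = fun n => (a n + ·) '' A n := funext hu
  have mem_u : ∀ n, ∀ x ∈ A n, a n + x ∈ (a n + ·) '' A n := fun n x hx => ⟨x, hx, rfl⟩
  have a_mem : ∀ n, a n ∈ (a n + ·) '' A n := fun n => ⟨0, (hA n).1, add_zero _⟩
  refine ⟨⟨fun h => ⟨?_, ?_⟩, ?_⟩, ⟨?_, ?_⟩⟩
  · intro ε hε
    obtain ⟨k, hk⟩ := h ε hε
    refine ⟨k, fun m hm n hn x hx y hy => ?_⟩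
    obtain rfl : x = a m := hx
    obtain rfl : y = a n := hy
    exact hk m hm n hn _ (a_mem m) _ (a_mem n)
  · intro ε hε
    obtain ⟨k, hk⟩ := h (ε / 2) (hε.half hN)
    refine ⟨k, fun m hm n hn x hx y hy => ?_⟩
    have h₁ := hk m hm m hm _ (mem_u m x hx) _ (a_mem m)
    have h₂ := hk n hn n hn _ (mem_u n y hy) _ (a_mem n)
    rw [add_sub_cancel_left, abs_lt] at h₁ h₂
    rw [abs_lt]
    constructor <;> linarith [h₁.1, h₁.2, h₂.1, h₂.2]
  · rintro ⟨ha, hAc⟩ ε hε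
    obtain ⟨k, hk⟩ := ha (ε / 2) (hε.half hN)
    obtain ⟨l, hl⟩ := hAc (ε / 2) (hε.half hN)
    refine ⟨max k l, fun m hm n hn => ?_⟩
    rintro _ ⟨x, hx, rfl⟩ _ ⟨y, hy, rfl⟩
    have h₁ := hk m (le_of_max_le_left hm) n (le_of_max_le_left hn) _ rfl _ rfl
    have h₂ := hl m (le_of_max_le_right hm) n (le_of_max_le_right hn) x hx y hy
    rw [abs_lt] at h₁ h₂
    rw [abs_lt]
    constructor <;> linarith [h₁.1, h₁.2, h₂.1, h₂.2]
  · rintro ⟨k, hk⟩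
    have A_sub : ∀ n ≥ k, ∀ x ∈ A n, x ∈ N := fun n hn x hx => by
      simpa using hk n hn n hn (Set.sub_mem_sub (mem_u n x hx) (a_mem n))
    refine ⟨⟨k, fun m hm n hn => ?_⟩, ⟨k, fun m hm n hn => ?_⟩⟩
    · rintro _ ⟨x, hx, y, hy, rfl⟩
      obtain rfl : x = a n := hx
      obtain rfl : y = a m := hy
      exact hk m hm n hn (Set.sub_mem_sub (a_mem n) (a_mem m))
    · rintro _ ⟨x, hx, y, hy, rfl⟩
      simpa [sub_eq_add_neg] using
        hN.2.1 _ (A_sub n hn x hx) _ (hN.2.2.1 _ (A_sub m hm y hy))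
  · rintro ⟨⟨k, hk⟩, ⟨l, hl⟩⟩
    refine ⟨max k l, fun m hm n hn => ?_⟩
    rintro _ ⟨_, ⟨x, hx, rfl⟩, _, ⟨y, hy, rfl⟩, rfl⟩
    have h₁ : a n - a m ∈ N := hk m (le_of_max_le_left hm) n (le_of_max_le_left hn)
      (Set.sub_mem_sub rfl rfl)
    have h₂ : x - y ∈ N := hl m (le_of_max_le_right hm) n (le_of_max_le_right hn)
      (Set.sub_mem_sub hx hy)
    have h₃ := hN.2.1 _ h₁ _ h₂
    rwa [← add_sub_add_comm] at h₃
end
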